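/- For any program Ω with weight constraints, a consistent set Z of literals is an answer set for Ω if and only if Z is an answer set for the nondisjunctive translation [Ω]^{nd}. -/

import Mathlib

open Classical

/-- A literal: a propositional atom `a` or its classical negation `¬ a`. -/
inductive Lit (α : Type) where
  | pos : α → Lit α
  | neg : α → Lit α

/-- The atom of a literal. -/
def Lit.atom {α : Type} : Lit α → α
  | .pos a => a
  | .neg a => a

/-- Mapping literals along a map of atoms. -/
def Lit.map {α β : Type} (f : α → β) : Lit α → Lit β
  | .pos a => .pos (f a)
  | .neg a => .neg (f a)

/-- A set of literals is consistent if it contains no pair `a`, `¬ a`. -/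
def LitConsistent {α : Type} (Z : Set (Lit α)) : Prop :=
  ∀ a : α, ¬(Lit.pos a ∈ Z ∧ Lit.neg a ∈ Z)

/-- Formulas (nested expressions): elementary formulas are literals, `⊥` and `⊤`;
formulas are built from them using negation as failure `naf`, conjunction `conj`
and disjunction `disj`. -/
inductive Formula (α : Type) where
  | lit : Lit α → Formula α
  | fbot : Formula α
  | ftop : Formula α
  | naf : Formula α → Formula α
  | conj : Formula α → Formula α → Formula α
  | disj : Formula α → Formula α → Formula α

/-- Satisfaction of a formula by a set of literals. -/
def Formula.sat {α : Type} (Z : Set (Lit α)) : Formula α → Prop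
  | .lit l => l ∈ Z
  | .fbot => False
  | .ftop => True
  | .naf F => ¬ F.sat Z
  | .conj F G => F.sat Z ∧ G.sat Z
  | .disj F G => F.sat Z ∨ G.sat Z

/-- A rule with nested expressions: `head ← body`. -/
structure NRule (α : Type) where
  head : Formula α
  body : Formula α

/-- `Z` satisfies a program (a set of rules). -/
def progSat {α : Type} (Z : Set (Lit α)) (P : Set (NRule α)) : Prop :=
  ∀ r ∈ P, r.body.sat Z → r.head.sat Z

/-- The reduct `F^Z` of a formula relative to a set of literals `Z`. -/
noncomputable def Formula.reduct {α : Type} (Z : Set (Lit α)) : Formula α → Formula α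
  | .lit l => .lit l
  | .fbot => .fbot
  | .ftop => .ftop
  | .naf F => if F.sat Z then .fbot else .ftop
  | .conj F G => .conj (F.reduct Z) (G.reduct Z)
  | .disj F G => .disj (F.reduct Z) (G.reduct Z)

/-- The reduct `Π^Z` of a program. -/
noncomputable def progReduct {α : Type} (Z : Set (Lit α)) (P : Set (NRule α)) : Set (NRule α) :=
  (fun r : NRule α => NRule.mk (r.head.reduct Z) (r.body.reduct Z)) '' P

/-- `Z` is minimal (under inclusion) among the consistent sets of literals satisfying `P`. -/
def MinimalSat {α : Type} (Z : Set (Lit α)) (P : Set (NRule α)) : Prop :=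
  LitConsistent Z ∧ progSat Z P ∧
    ∀ Z' : Set (Lit α), LitConsistent Z' → progSat Z' P → Z' ⊆ Z → Z' = Z

/-- `Z` is an answer set for a program `P` with nested expressions:
`Z` is minimal among the consistent sets satisfying the reduct `P^Z`. -/
def AnswerSet {α : Type} (Z : Set (Lit α)) (P : Set (NRule α)) : Prop :=
  MinimalSat Z (progReduct Z P)

/-- Strong equivalence of programs with nested expressions. -/
def StrongEq {α : Type} (P₁ P₂ : Set (NRule α)) : Prop :=
  ∀ P : Set (NRule α), ∀ Z : Set (Lit α), AnswerSet Z (P₁ ∪ P) ↔ AnswerSet Z (P₂ ∪ P)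

/-- Multiple conjunction (the empty conjunction is `⊤`). -/
def bigConj {α : Type} : List (Formula α) → Formula α
  | [] => .ftop
  | F :: Fs => .conj F (bigConj Fs)

/-- Multiple disjunction (the empty disjunction is `⊥`). -/
def bigDisj {α : Type} : List (Formula α) → Formula α
  | [] => .fbot
  | F :: Fs => .disj F (bigDisj Fs)

/-- `⟨F₁,…,F_n⟩:X`: the disjunction over `I ∈ X` of the conjunctions of the `Fᵢ`, `i ∈ I`. -/
noncomputable def angled {α : Type} {n : ℕ} (F : Fin n → Formula α) (X : Finset (Finset (Fin n))) :
    Formula α :=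
  bigDisj (X.toList.map fun I => bigConj (I.toList.map F))
/-- A rule element: a literal (positive rule element) or a literal
prefixed with negation as failure (negative rule element). -/
inductive RElem (α : Type) where
  | pos : Lit α → RElem α
  | neg : Lit α → RElem α

/-- Satisfaction of a rule element by a set of literals. -/
def RElem.sat {α : Type} (Z : Set (Lit α)) : RElem α → Prop
  | .pos l => l ∈ Z
  | .neg l => l ∉ Z

/-- Whether a rule element is negative. -/
def RElem.isNegB {α : Type} : RElem α → Bool
  | .pos _ => false
  | .neg _ => true

/-- The sum of the weights of the entries of `S` that are satisfied by `Z`. -/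
noncomputable def weightSum {α : Type} (Z : Set (Lit α)) (S : List (RElem α × ℝ)) : ℝ :=
  (S.map fun p => if p.1.sat Z then p.2 else 0).sum

/-- A weight constraint `L ≤ {c₁=w₁,…,c_m=w_m} ≤ U` with nonnegative weights;
`L` and `U` may be `−∞`/`+∞`. -/
structure WConstraint (α : Type) where
  L : EReal
  S : List (RElem α × ℝ)
  U : EReal
  nonneg : ∀ p ∈ S, (0 : ℝ) ≤ p.2

/-- `Z` satisfies the weight constraint `L ≤ S ≤ U`. -/
def WConstraint.sat {α : Type} (Z : Set (Lit α)) (C : WConstraint α) : Prop :=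
  C.L ≤ (weightSum Z C.S : EReal) ∧ (weightSum Z C.S : EReal) ≤ C.U

/-- A rule with weight constraints, `C₀ ← C₁,…,C_n`. -/
structure WRule (α : Type) where
  head : WConstraint α
  body : List (WConstraint α)

/-- `Z` satisfies a program with weight constraints. -/
def wProgSat {α : Type} (Z : Set (Lit α)) (Ω : Set (WRule α)) : Prop :=
  ∀ R ∈ Ω, (∀ C ∈ R.body, C.sat Z) → R.head.sat Z

/-- A weight constraint of the form `L ≤ S` (no upper bound), with nonnegative weights. -/
structure LConstraint (α : Type) where
  L : EReal
  S : List (RElem α × ℝ)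
  nonneg : ∀ p ∈ S, (0 : ℝ) ≤ p.2

/-- Satisfaction of a lower-bound constraint (by an arbitrary set of literals). -/
def LConstraint.sat {α : Type} (Z : Set (Lit α)) (C : LConstraint α) : Prop :=
  C.L ≤ (weightSum Z C.S : EReal)

/-- A Horn rule: a literal as head, lower-bound constraints as body. -/
structure HornRule (α : Type) where
  head : Lit α
  body : List (LConstraint α)

/-- Satisfaction of a set of Horn rules by an arbitrary set of literals. -/
def hornSat {α : Type} (Z : Set (Lit α)) (P : Set (HornRule α)) : Prop :=
  ∀ r ∈ P, (∀ C ∈ r.body, C.sat Z) → r.head ∈ Z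

/-- The deductive closure of a set of Horn rules: its unique minimal satisfying
set of literals (the intersection of all satisfying sets). -/
def cl {α : Type} (P : Set (HornRule α)) : Set (Lit α) :=
  ⋂₀ {Z : Set (Lit α) | hornSat Z P}

/-- The sum of the weights of the negative entries of `S` satisfied by `Z`. -/
noncomputable def negSatWeight {α : Type} (Z : Set (Lit α)) (S : List (RElem α × ℝ)) : ℝ :=
  (S.map fun p => if p.1.isNegB = true ∧ p.1.sat Z then p.2 else 0).sum

/-- The reduct `(L ≤ S)^Z` of a lower-bound constraint: drop the negative entries
of `S` and decrease `L` by the total weight of the negative entries satisfied by `Z`. -/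
noncomputable def LConstraint.reduct {α : Type} (Z : Set (Lit α)) (C : LConstraint α) :
    LConstraint α :=
  ⟨C.L - ((negSatWeight Z C.S : ℝ) : EReal),
   C.S.filter (fun p => !p.1.isNegB),
   fun p hp => C.nonneg p (List.mem_of_mem_filter hp)⟩

/-- The lower-bound part `L ≤ S` of a weight constraint `L ≤ S ≤ U`. -/
def WConstraint.lower {α : Type} (C : WConstraint α) : LConstraint α :=
  ⟨C.L, C.S, C.nonneg⟩

/-- The positive rule elements (as literals) occurring in `S`. -/
def posElems {α : Type} (S : List (RElem α × ℝ)) : Set (Lit α) :=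
  {l : Lit α | ∃ w : ℝ, (RElem.pos l, w) ∈ S}

/-- The reduct `Ω^Z` of a program with weight constraints: for each rule
`L₀≤S₀≤U₀ ← C₁,…,C_n` whose upper bounds are all satisfied by `Z`, the Horn rules
`l ← C₁^Z,…,C_n^Z` for all positive rule elements `l` of `S₀` with `l ∈ Z`. -/
noncomputable def wProgReduct {α : Type} (Z : Set (Lit α)) (Ω : Set (WRule α)) :
    Set (HornRule α) :=
  { r : HornRule α | ∃ R ∈ Ω,
      (∀ C ∈ R.body, (weightSum Z C.S : EReal) ≤ C.U) ∧
      r.head ∈ posElems R.head.S ∧ r.head ∈ Z ∧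
      r.body = R.body.map (fun C => C.lower.reduct Z) }

/-- `Z` is an answer set for the program `Ω` with weight constraints. -/
def WAnswerSet {α : Type} (Z : Set (Lit α)) (Ω : Set (WRule α)) : Prop :=
  LitConsistent Z ∧ wProgSat Z Ω ∧ cl (wProgReduct Z Ω) = Z

/-- Strong equivalence of programs with weight constraints. -/
def WStrongEq {α : Type} (Ω₁ Ω₂ : Set (WRule α)) : Prop :=
  ∀ Ω : Set (WRule α), ∀ Z : Set (Lit α), WAnswerSet Z (Ω₁ ∪ Ω) ↔ WAnswerSet Z (Ω₂ ∪ Ω)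

/-- A rule element as a formula: `l` becomes the literal `l`, `not l` becomes `naf l`. -/
def RElem.toFormula {α : Type} : RElem α → Formula α
  | .pos l => .lit l
  | .neg l => .naf (.lit l)

/-- The translation `[L ≤ S]`: the formula `⟨c₁,…,c_m⟩:{I : L ≤ Σ_{i∈I} wᵢ}`. -/
noncomputable def trLower {α : Type} (L : EReal) (S : List (RElem α × ℝ)) : Formula α :=
  angled (fun i : Fin S.length => (S.get i).1.toFormula)
    (Finset.univ.filter fun I : Finset (Fin S.length) =>
      L ≤ ((∑ i ∈ I, (S.get i).2 : ℝ) : EReal))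

/-- The translation `[S ≤ U]`: the formula `not ⟨c₁,…,c_m⟩:{I : U < Σ_{i∈I} wᵢ}`. -/
noncomputable def trUpper {α : Type} (S : List (RElem α × ℝ)) (U : EReal) : Formula α :=
  .naf (angled (fun i : Fin S.length => (S.get i).1.toFormula)
    (Finset.univ.filter fun I : Finset (Fin S.length) =>
      U < ((∑ i ∈ I, (S.get i).2 : ℝ) : EReal)))

/-- The translation `[L ≤ S ≤ U] = [L ≤ S],[S ≤ U]`. -/
noncomputable def trWC {α : Type} (C : WConstraint α) : Formula α :=
  .conj (trLower C.L C.S) (trUpper C.S C.U)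

/-- The formulas `l ; not l` for the positive rule elements `l` of `S`, in order. -/
def choiceFmls {α : Type} (S : List (RElem α × ℝ)) : List (Formula α) :=
  S.filterMap fun p =>
    match p.1 with
    | RElem.pos l => some (Formula.disj (.lit l) (.naf (.lit l)))
    | RElem.neg _ => none

/-- The translation of a rule with weight constraints `C₀ ← C₁,…,C_n`:
`(l₁; not l₁),…,(l_p; not l_p),[C₀] ← [C₁],…,[C_n]`. -/
noncomputable def trRule {α : Type} (R : WRule α) : NRule α :=
  ⟨bigConj (choiceFmls R.head.S ++ [trWC R.head]), bigConj (R.body.map trWC)⟩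

/-- The translation `[Ω]` of a program with weight constraints. -/
noncomputable def trProg {α : Type} (Ω : Set (WRule α)) : Set (NRule α) :=
  trRule '' Ω

/-- The nondisjunctive translation `[Ω]^{nd}`: each rule `C₀ ← C₁,…,C_n` is replaced
by the rules `l ← not not l, [C₁],…,[C_n]` for all positive rule elements `l` of `C₀`
together with `⊥ ← not [C₀], [C₁],…,[C_n]`. -/
noncomputable def ndTrans {α : Type} (Ω : Set (WRule α)) : Set (NRule α) :=
  { r : NRule α | ∃ R ∈ Ω,
      (∃ l ∈ posElems R.head.S,
        r = ⟨.lit l, bigConj (.naf (.naf (.lit l)) :: R.body.map trWC)⟩) ∨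
      r = ⟨.fbot, bigConj (.naf (trWC R.head) :: R.body.map trWC)⟩ }

/-!
Since weights are nonnegative, some set of satisfied elements has weight at least `L` exactly
when the set of all satisfied elements does; hence `[C]` expresses `C`. Passing to reducts,
`[C]^Z` splits into the lower bound `(L ≤ S)^Z` and a test on `Z` alone, `S ≤ U`. Therefore `X`
satisfies `([Ω]^{nd})^Z` iff it is closed under the Horn program `Ω^Z` and `Z` satisfies the head
of every rule whose translated body has its reduct satisfied by `X`. Reducts are `not`-free,
hence monotone in `X`, so for a model `Z` of `Ω` the second condition holds for every `X ⊆ Z`.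
Thus the models of `([Ω]^{nd})^Z` below `Z` are the subsets of `Z` closed under `Ω^Z`, and `Z` is
minimal among them iff it is `cl (Ω^Z)`.
-/

variable {α : Type} {X Y Z : Set (Lit α)}

theorem LitConsistent.mono (hY : LitConsistent Y) (h : X ⊆ Y) : LitConsistent X :=
  fun a ha ↦ hY a ⟨h ha.1, h ha.2⟩

namespace Formula

theorem sat_reduct_naf (F : Formula α) : (F.naf.reduct Z).sat X ↔ ¬ F.sat Z := by
  by_cases h : F.sat Z <;> simp [reduct, sat, h]

theorem sat_reduct_self (F : Formula α) : (F.reduct Z).sat Z ↔ F.sat Z := by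
  induction F with
  | naf F => exact sat_reduct_naf F
  | _ => simp_all [reduct, sat]

theorem sat_reduct_mono (F : Formula α) (h : X ⊆ Y) : (F.reduct Z).sat X → (F.reduct Z).sat Y := by
  induction F with
  | lit l => exact fun hl ↦ h hl
  | fbot => exact id
  | ftop => exact id
  | naf F => simp only [sat_reduct_naf, imp_self]
  | conj F G ihF ihG => exact And.imp ihF ihG
  | disj F G ihF ihG => exact Or.imp ihF ihG

theorem sat_bigConj (Fs : List (Formula α)) : (bigConj Fs).sat X ↔ ∀ F ∈ Fs, F.sat X := by
  induction Fs <;> simp_all [bigConj, sat]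

theorem sat_bigDisj (Fs : List (Formula α)) : (bigDisj Fs).sat X ↔ ∃ F ∈ Fs, F.sat X := by
  induction Fs <;> simp_all [bigDisj, sat]

theorem reduct_bigConj (Fs : List (Formula α)) :
    (bigConj Fs).reduct Z = bigConj (Fs.map (reduct Z)) := by
  induction Fs <;> simp_all [bigConj, reduct]

theorem reduct_bigDisj (Fs : List (Formula α)) :
    (bigDisj Fs).reduct Z = bigDisj (Fs.map (reduct Z)) := by
  induction Fs <;> simp_all [bigDisj, reduct]

variable {n : ℕ} (F : Fin n → Formula α) (𝒳 : Finset (Finset (Fin n)))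

theorem sat_angled : (angled F 𝒳).sat X ↔ ∃ I ∈ 𝒳, ∀ i ∈ I, (F i).sat X := by
  simp [angled, sat_bigDisj, sat_bigConj]

theorem reduct_angled : (angled F 𝒳).reduct Z = angled (fun i ↦ (F i).reduct Z) 𝒳 := by
  simp [angled, reduct_bigDisj, reduct_bigConj, Function.comp_def]

end Formula

theorem exists_sum_mem_forall_iff_sum_filter_mem {ι M : Type*} [Fintype ι] [AddCommMonoid M]
    [PartialOrder M] [IsOrderedAddMonoid M] {w : ι → M} (hw : ∀ i, 0 ≤ w i) (q : ι → Prop)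
    [DecidablePred q] {s : Set M} (hs : IsUpperSet s) :
    (∃ I : Finset ι, ∑ i ∈ I, w i ∈ s ∧ ∀ i ∈ I, q i) ↔ ∑ i with q i, w i ∈ s := by
  refine ⟨fun ⟨I, hI, hq⟩ ↦ hs ?_ hI, fun h ↦ ⟨_, h, by simp⟩⟩
  exact Finset.sum_le_sum_of_subset_of_nonneg (fun i hi ↦ by simpa using hq i hi) fun i _ _ ↦ hw i

theorem Formula.sat_angled_iff_weight_mem {S : List (RElem α × ℝ)} (hS : ∀ p ∈ S, 0 ≤ p.2)
    (G : RElem α → Formula α) {s : Set ℝ} (hs : IsUpperSet s)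
    {𝒳 : Finset (Finset (Fin S.length))} (h𝒳 : ∀ I, I ∈ 𝒳 ↔ ∑ i ∈ I, (S.get i).2 ∈ s) :
    (angled (fun i ↦ G (S.get i).1) 𝒳).sat X ↔
      (S.map fun p ↦ if (G p.1).sat X then p.2 else 0).sum ∈ s := by
  rw [← Fin.sum_univ_fun_getElem, ← Finset.sum_filter]
  simp only [sat_angled, h𝒳]
  exact exists_sum_mem_forall_iff_sum_filter_mem (fun i ↦ hS _ (S.get_mem i)) _ hs

theorem isUpperSet_setOf_le_coe (L : EReal) : IsUpperSet {x : ℝ | L ≤ x} :=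
  (isUpperSet_Ici L).preimage EReal.coe_strictMono.monotone

theorem isUpperSet_setOf_lt_coe (U : EReal) : IsUpperSet {x : ℝ | U < x} :=
  (isUpperSet_Ioi U).preimage EReal.coe_strictMono.monotone

theorem weightSum_mono {S : List (RElem α × ℝ)} (hS : ∀ p ∈ S, 0 ≤ p.2)
    (hpos : ∀ p ∈ S, p.1.isNegB = false) (h : X ⊆ Y) : weightSum X S ≤ weightSum Y S := by
  refine List.sum_le_sum fun ⟨c, w⟩ hp ↦ ?_
  cases c with
  | pos l =>
    by_cases hX : l ∈ X
    · simp [RElem.sat, hX, h hX]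
    · simpa [RElem.sat, hX] using ite_nonneg (hS _ hp) le_rfl
  | neg l => cases hpos _ hp

/-- A lower-bound constraint free of negative rule elements, as allowed in the body of a Horn
rule; the type `LConstraint` does not enforce this. -/
def LConstraint.IsPositive (C : LConstraint α) : Prop :=
  ∀ p ∈ C.S, p.1.isNegB = false

namespace LConstraint

variable {C : LConstraint α}

theorem IsPositive.sat_mono (hC : C.IsPositive) (h : X ⊆ Y) (hX : C.sat X) : C.sat Y :=
  hX.trans <| EReal.coe_le_coe <| weightSum_mono C.nonneg hC h

theorem isPositive_reduct : (C.reduct Z).IsPositive :=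
  fun _ hp ↦ by simpa using List.of_mem_filter hp

end LConstraint

theorem cl_subset {P : Set (HornRule α)} (hX : hornSat X P) : cl P ⊆ X :=
  Set.sInter_subset_of_mem hX

theorem hornSat_cl {P : Set (HornRule α)} (hP : ∀ r ∈ P, ∀ C ∈ r.body, C.IsPositive) :
    hornSat (cl P) P := by
  intro r hr hbody X hX
  exact hX r hr fun C hC ↦ (hP r hr C hC).sat_mono (cl_subset hX) (hbody C hC)

namespace RElem

variable (c : RElem α)

theorem sat_toFormula : c.toFormula.sat Z ↔ c.sat Z := by
  cases c <;> rfl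

theorem sat_reduct_toFormula :
    (c.toFormula.reduct Z).sat X ↔ if c.isNegB then c.sat Z else c.sat X := by
  cases c with
  | pos l => rfl
  | neg l => exact Formula.sat_reduct_naf _

end RElem

/-- The weight of `S` when positive rule elements are evaluated in `X` and negative ones in `Z`,
that is, the total weight of the elements whose reduct relative to `Z` is satisfied by `X`. It
decides both `[L ≤ S]^Z` and `(L ≤ S)^Z` at `X`. -/
noncomputable def reductWeightSum (Z X : Set (Lit α)) (S : List (RElem α × ℝ)) : ℝ :=
  (S.map fun p ↦ if (p.1.toFormula.reduct Z).sat X then p.2 else 0).sum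

theorem reductWeightSum_eq_add (S : List (RElem α × ℝ)) :
    reductWeightSum Z X S = weightSum X (S.filter fun p ↦ !p.1.isNegB) + negSatWeight Z S := by
  simp only [reductWeightSum, weightSum, negSatWeight, RElem.sat_reduct_toFormula]
  induction S with
  | nil => simp
  | cons p S ih => by_cases hp : p.1.isNegB <;> simp [hp, ih, add_assoc, add_left_comm]

theorem LConstraint.sat_reduct (C : LConstraint α) :
    (C.reduct Z).sat X ↔ C.L ≤ reductWeightSum Z X C.S := by
  rw [reductWeightSum_eq_add, EReal.coe_add]
  exact EReal.sub_le_iff_le_add (.inl (EReal.coe_ne_bot _)) (.inl (EReal.coe_ne_top _))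

section Translation

variable {S : List (RElem α × ℝ)}

theorem sat_reduct_trLower (hS : ∀ p ∈ S, 0 ≤ p.2) (L : EReal) :
    ((trLower L S).reduct Z).sat X ↔ L ≤ reductWeightSum Z X S := by
  rw [trLower, Formula.reduct_angled]
  exact Formula.sat_angled_iff_weight_mem hS (fun c ↦ c.toFormula.reduct Z)
    (isUpperSet_setOf_le_coe L) (by simp)

theorem sat_trLower (hS : ∀ p ∈ S, 0 ≤ p.2) (L : EReal) :
    (trLower L S).sat Z ↔ L ≤ weightSum Z S := by
  simp only [weightSum, ← RElem.sat_toFormula]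
  exact Formula.sat_angled_iff_weight_mem hS RElem.toFormula (isUpperSet_setOf_le_coe L) (by simp)

theorem sat_trUpper (hS : ∀ p ∈ S, 0 ≤ p.2) (U : EReal) :
    (trUpper S U).sat Z ↔ weightSum Z S ≤ U := by
  simp only [weightSum, ← RElem.sat_toFormula, ← not_lt]
  exact not_congr <|
    Formula.sat_angled_iff_weight_mem hS RElem.toFormula (isUpperSet_setOf_lt_coe U) (by simp)

theorem sat_trWC (C : WConstraint α) : (trWC C).sat Z ↔ C.sat Z :=
  and_congr (sat_trLower C.nonneg C.L) (sat_trUpper C.nonneg C.U)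

theorem sat_reduct_trUpper (hS : ∀ p ∈ S, 0 ≤ p.2) (U : EReal) :
    ((trUpper S U).reduct Z).sat X ↔ weightSum Z S ≤ U :=
  (Formula.sat_reduct_naf _).trans (sat_trUpper hS U)

theorem sat_reduct_trWC (C : WConstraint α) :
    ((trWC C).reduct Z).sat X ↔ (C.lower.reduct Z).sat X ∧ weightSum Z C.S ≤ C.U :=
  and_congr ((sat_reduct_trLower C.nonneg C.L).trans C.lower.sat_reduct.symm)
    (sat_reduct_trUpper C.nonneg C.U)

end Translation

/-- The translation `[C₁],…,[C_n]` of the body of a rule `C₀ ← C₁,…,C_n`. -/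
noncomputable def WRule.trBody (R : WRule α) : Formula α :=
  bigConj (R.body.map trWC)

namespace WRule

variable (R : WRule α)

theorem sat_trBody : R.trBody.sat Z ↔ ∀ C ∈ R.body, C.sat Z := by
  simp [trBody, Formula.sat_bigConj, sat_trWC]

theorem sat_reduct_trBody :
    (R.trBody.reduct Z).sat X ↔
      (∀ C ∈ R.body, (C.lower.reduct Z).sat X) ∧ ∀ C ∈ R.body, weightSum Z C.S ≤ C.U := by
  simp [trBody, Formula.reduct_bigConj, Formula.sat_bigConj, sat_reduct_trWC, forall_and]

end WRule

section Programs

variable {Ω : Set (WRule α)}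

theorem hornSat_wProgReduct_self : hornSat Z (wProgReduct Z Ω) :=
  fun _ ⟨_, _, _, _, hZ, _⟩ _ ↦ hZ

theorem hornSat_cl_wProgReduct : hornSat (cl (wProgReduct Z Ω)) (wProgReduct Z Ω) := by
  refine hornSat_cl ?_
  rintro r ⟨R, -, -, -, -, hbody⟩ C hC
  obtain ⟨D, -, rfl⟩ := List.mem_map.1 (hbody ▸ hC)
  exact LConstraint.isPositive_reduct

theorem hornSat_wProgReduct_iff :
    hornSat X (wProgReduct Z Ω) ↔
      ∀ R ∈ Ω, ∀ l ∈ posElems R.head.S, l ∈ Z → (R.trBody.reduct Z).sat X → l ∈ X := by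
  simp only [WRule.sat_reduct_trBody]
  constructor
  · rintro h R hR l hl hlZ ⟨hlower, hupper⟩
    exact h ⟨l, R.body.map fun C ↦ C.lower.reduct Z⟩ ⟨R, hR, hupper, hl, hlZ, rfl⟩ (by simpa)
  · rintro h ⟨l, _⟩ ⟨R, hR, hupper, hl, hlZ, rfl⟩ hlower
    exact h R hR l hl hlZ ⟨by simpa using hlower, hupper⟩

theorem progSat_reduct_ndTrans_iff :
    progSat X (progReduct Z (ndTrans Ω)) ↔
      hornSat X (wProgReduct Z Ω) ∧ ∀ R ∈ Ω, (R.trBody.reduct Z).sat X → R.head.sat Z := by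
  have sat_choice_body (R : WRule α) (l : Lit α) :
      ((Formula.conj (.naf (.naf (.lit l))) R.trBody).reduct Z).sat X ↔
        l ∈ Z ∧ (R.trBody.reduct Z).sat X :=
    and_congr_left' <| (Formula.sat_reduct_naf _).trans not_not
  have sat_constraint_body (R : WRule α) :
      ((Formula.conj (.naf (trWC R.head)) R.trBody).reduct Z).sat X ↔
        ¬ R.head.sat Z ∧ (R.trBody.reduct Z).sat X :=
    and_congr_left' <| (Formula.sat_reduct_naf _).trans (sat_trWC _).not
  rw [hornSat_wProgReduct_iff]
  constructor
  · refine fun h ↦ ⟨fun R hR l hl hlZ hbody ↦ ?_, fun R hR hbody ↦ ?_⟩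
    · exact h _ ⟨_, ⟨R, hR, .inl ⟨l, hl, rfl⟩⟩, rfl⟩ ((sat_choice_body R l).2 ⟨hlZ, hbody⟩)
    · by_contra hhead
      exact h _ ⟨_, ⟨R, hR, .inr rfl⟩, rfl⟩ ((sat_constraint_body R).2 ⟨hhead, hbody⟩)
  · rintro ⟨hclosed, hconstr⟩ _ ⟨_, ⟨R, hR, ⟨l, hl, rfl⟩ | rfl⟩, rfl⟩ hbody
    · obtain ⟨hlZ, hbody⟩ := (sat_choice_body R l).1 hbody
      exact hclosed R hR l hl hlZ hbody
    · obtain ⟨hhead, hbody⟩ := (sat_constraint_body R).1 hbody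
      exact hhead (hconstr R hR hbody)

theorem progSat_reduct_ndTrans_self :
    progSat Z (progReduct Z (ndTrans Ω)) ↔ wProgSat Z Ω := by
  simp only [progSat_reduct_ndTrans_iff, hornSat_wProgReduct_self, true_and,
    Formula.sat_reduct_self, WRule.sat_trBody, wProgSat]

theorem progSat_reduct_ndTrans_of_subset (hZ : wProgSat Z Ω) (h : X ⊆ Z) :
    progSat X (progReduct Z (ndTrans Ω)) ↔ hornSat X (wProgReduct Z Ω) := by
  refine progSat_reduct_ndTrans_iff.trans (and_iff_left fun R hR hbody ↦ hZ R hR ?_)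
  rw [← R.sat_trBody, ← Formula.sat_reduct_self]
  exact R.trBody.sat_reduct_mono h hbody

end Programs

theorem nd_sound_general (Ω : Set (WRule α)) (Z : Set (Lit α)) :
    WAnswerSet Z Ω ↔ AnswerSet Z (ndTrans Ω) := by
  unfold WAnswerSet AnswerSet MinimalSat
  rw [progSat_reduct_ndTrans_self]
  refine and_congr_right fun hcons ↦ and_congr_right fun hmodel ↦ ?_
  have cl_subset_self : cl (wProgReduct Z Ω) ⊆ Z := cl_subset hornSat_wProgReduct_self
  constructor
  · intro hcl X _ hX hXZ
    have hhorn := (progSat_reduct_ndTrans_of_subset hmodel hXZ).1 hX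
    exact hXZ.antisymm (hcl.symm.subset.trans (cl_subset hhorn))
  · intro hmin
    exact hmin _ (hcons.mono cl_subset_self)
      ((progSat_reduct_ndTrans_of_subset hmodel cl_subset_self).2 hornSat_cl_wProgReduct)
      cl_subset_self

/-- A consistent set `Z` of literals is an answer set for a program `Ω` with weight
constraints iff `Z` is an answer set for the nondisjunctive translation `[Ω]^{nd}`. -/
theorem nd_sound (Ω : Set (WRule ℕ)) (Z : Set (Lit ℕ)) (hZ : LitConsistent Z) :
    WAnswerSet Z Ω ↔ AnswerSet Z (ndTrans Ω) :=
  nd_sound_general Ω Z
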